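/- arXiv:1810.10849 — 2 statements merged into one kernel-verified Lean document; each statement's English description precedes it below -/
import Mathlib

section
/- Let d ≥ 1 and N > 0. For every f ∈ 𝒫_N (pointwise values taken via the continuous representative of f), the family (f(n/N)·f_{N,n})_{n∈ℤ^d} is summable in L²(ℝ^d) with sum f, i.e. f = Σ_{n∈ℤ^d} f(n/N) f_{N,n} in L²(ℝ^d), and moreover ∫_{ℝ^d} |f(x)|² dx = N^{-d} Σ_{n∈ℤ^d} |f(n/N)|². -/
open MeasureTheory Filter Topology Metric ENNReal NNReal

noncomputable section

/-- `sinc` with value 1 at 0. -/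
def sinc' (x : ℝ) : ℝ := if x = 0 then 1 else Real.sin x / x

/-- The function `f_{N,n}(x) = ∏_j sin (π (N x_j - n_j)) / (π (N x_j - n_j))`. -/
def fN (d : ℕ) (N : ℝ) (n : Fin d → ℤ) (x : EuclideanSpace ℝ (Fin d)) : ℝ :=
  ∏ j, sinc' (Real.pi * (N * x j - n j))

/-- The lattice point `n / N` in `ℝ^d`. -/
def latticePt (d : ℕ) (N : ℝ) (n : Fin d → ℤ) : EuclideanSpace ℝ (Fin d) :=
  WithLp.toLp 2 (fun j => (n j : ℝ) / N)

/-- The heat solution at time `t > 0` with initial datum `u₀ ∈ L²(ℝ^d)`: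
`u(t,x) = (4πt)^{-d/2} ∫ e^{-|x-y|²/(4t)} u₀(y) dy`. -/
def heatSol (d : ℕ) (u₀ : EuclideanSpace ℝ (Fin d) → ℝ) (t : ℝ)
    (x : EuclideanSpace ℝ (Fin d)) : ℝ :=
  (4 * Real.pi * t) ^ (-(d : ℝ) / 2) * ∫ y, Real.exp (-‖x - y‖ ^ 2 / (4 * t)) * u₀ y

/-- The family `F` is summable in `L²(ℝ^d)` with sum `g`: the finite partial sums
converge to `g` in the `L²` norm along the filter of finite subsets of `ℤ^d`. -/
def HasSumL2 (d : ℕ) {V : Type} [NormedAddCommGroup V]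
    (F : (Fin d → ℤ) → EuclideanSpace ℝ (Fin d) → V)
    (g : EuclideanSpace ℝ (Fin d) → V) : Prop :=
  Tendsto (fun s : Finset (Fin d → ℤ) =>
    eLpNorm (fun x => g x - ∑ n ∈ s, F n x) 2 volume) atTop (𝓝 0)

/-- The closed cube `Q_r(0)` in `ℝ^d`, centered at the origin, of side length `2r`. -/
def Qcube (d : ℕ) (r : ℝ) : Set (EuclideanSpace ℝ (Fin d)) := {ξ | ∀ j, |ξ j| ≤ r}

/-- The truncated Fourier integral, with the paper's normalization
`(2π)^{-d/2} ∫_{|x| ≤ R} e^{-i x·ξ} f(x) dx`. -/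
def truncFT (d : ℕ) (f : EuclideanSpace ℝ (Fin d) → ℂ) (R : ℝ)
    (ξ : EuclideanSpace ℝ (Fin d)) : ℂ :=
  (((2 * Real.pi) ^ (-(d : ℝ) / 2) : ℝ) : ℂ) *
    ∫ x in closedBall (0 : EuclideanSpace ℝ (Fin d)) R,
      Complex.exp (-(Complex.I * ((inner ℝ x ξ : ℝ) : ℂ))) * f x

/-- `fhat` is the Fourier transform of `f ∈ L²(ℝ^d)` in the `L²` (Plancherel) sense:
`fhat ∈ L²` and the Fourier integrals of the truncations of `f` converge to `fhat`
in the `L²` norm. -/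
def IsL2Fourier (d : ℕ) (f fhat : EuclideanSpace ℝ (Fin d) → ℂ) : Prop :=
  MemLp fhat 2 volume ∧
    Tendsto (fun R : ℝ => eLpNorm (fun ξ => fhat ξ - truncFT d f R ξ) 2 volume)
      atTop (𝓝 0)

/-- The `L²(ℝ^d)` norm of a function, as a real number. -/
def l2norm (d : ℕ) {V : Type} [NormedAddCommGroup V]
    (f : EuclideanSpace ℝ (Fin d) → V) : ℝ :=
  (eLpNorm f 2 volume).toReal

/-! For a continuous `f ∈ L²` band-limited to the cube of side `N` (in the frequency variable of the
kernel `e^{-2πi⟨x, ξ⟩}`), the transform `f̂` is square integrable with bounded support, hence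
integrable, so that Fourier inversion `f = 𝓕⁻ f̂` holds pointwise. Evaluated at the lattice point
`n / N` it says that `f (n / N)` is, up to the factor `N ^ d`, a Fourier coefficient of `f̂` on the
cube. Thus `f̂` is the `L²` sum of `f (n / N)` times normalized exponentials cut off to the cube,
and applying the isometry `𝓕⁻` turns these into the products of `sinc` functions; Parseval on the
cube followed by Plancherel gives the norm identity. -/

open FourierTransform SchwartzMap InnerProductSpace

section LpConvergence

variable {α ι E : Type*} [MeasurableSpace α] {μ : Measure α} [NormedAddCommGroup E] {p : ℝ≥0∞}

lemma hasSum_toLp_iff_tendsto_eLpNorm [Fact (1 ≤ p)] {F : ι → α → E} {g : α → E}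
    (hF : ∀ i, MemLp (F i) p μ) (hg : MemLp g p μ) :
    HasSum (fun i ↦ (hF i).toLp (F i)) (hg.toLp g) ↔
      Tendsto (fun s : Finset ι ↦ eLpNorm (fun x ↦ g x - ∑ i ∈ s, F i x) p μ) atTop (𝓝 0) := by
  have edist_eq (s : Finset ι) : edist (∑ i ∈ s, (hF i).toLp (F i)) (hg.toLp g) =
      eLpNorm (fun x ↦ g x - ∑ i ∈ s, F i x) p μ := by
    rw [edist_comm, Lp.edist_def]
    refine eLpNorm_congr_ae ?_
    filter_upwards [hg.coeFn_toLp, Lp.coeFn_finsetSum s fun i ↦ (hF i).toLp (F i),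
      (Finset.eventually_all s).2 fun i _ ↦ (hF i).coeFn_toLp] with x hgx hsum hFx
    rw [Pi.sub_apply, hgx, hsum, Finset.sum_apply, Finset.sum_congr rfl hFx]
  rw [HasSum, SummationFilter.unconditional_filter, tendsto_iff_edist_tendsto_0]
  simp only [edist_eq]

lemma tendsto_eLpNorm_sub_indicator {l : Filter ι} [l.IsCountablyGenerated]
    {φ : ι → Set α} (hφ : AECover μ l φ) {f : α → E} (hf : MemLp f p μ) (hp : p ≠ ∞) :
    Tendsto (fun i ↦ eLpNorm ((φ i).indicator f - f) p μ) l (𝓝 0) := by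
  rcases eq_or_ne p 0 with rfl | hp0
  · simp only [eLpNorm_exponent_zero, tendsto_const_nhds]
  have hp_pos : 0 < p.toReal := ENNReal.toReal_pos hp0 hp
  have lintegral_tendsto :
      Tendsto (fun i ↦ ∫⁻ x, ‖(φ i).indicator f x - f x‖ₑ ^ p.toReal ∂μ) l (𝓝 (∫⁻ _, 0 ∂μ)) := by
    refine tendsto_lintegral_filter_of_dominated_convergence' (fun x ↦ ‖f x‖ₑ ^ p.toReal)
      (.of_forall fun i ↦ ?_) (.of_forall fun i ↦ .of_forall fun x ↦ ?_)
      (lintegral_rpow_enorm_lt_top_of_eLpNorm_lt_top hp0 hp hf.2).ne ?_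
    · exact ((hf.1.indicator (hφ.measurableSet i)).sub hf.1).enorm.pow_const _
    · by_cases hx : x ∈ φ i <;> simp [hx, hp_pos]
    · filter_upwards [hφ.ae_eventually_mem] with x hx
      refine tendsto_const_nhds.congr' ?_
      filter_upwards [hx] with i hi
      simp [hi, hp_pos]
  simp only [eLpNorm_eq_lintegral_rpow_enorm_toReal hp0 hp, Pi.sub_apply]
  rw [lintegral_zero] at lintegral_tendsto
  simpa [hp_pos] using lintegral_tendsto.ennrpow_const (1 / p.toReal)

lemma norm_sq_toLp_two {f : α → E} (hf : MemLp f 2 μ) :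
    ‖hf.toLp f‖ ^ 2 = ∫ x, ‖f x‖ ^ 2 ∂μ := by
  rw [Lp.norm_toLp, toReal_eLpNorm hf.1,
    lpNorm_eq_integral_norm_rpow_toReal two_ne_zero ENNReal.ofNat_ne_top hf.1,
    ENNReal.toReal_ofNat, ← Real.rpow_natCast, ← Real.rpow_mul (by positivity)]
  simp

end LpConvergence

section AddHaar

variable {V E : Type*} [NormedAddCommGroup V] [NormedSpace ℝ V] [FiniteDimensional ℝ V]
  [MeasurableSpace V] [BorelSpace V] (μ : Measure V) [μ.IsAddHaarMeasure] [NormedAddCommGroup E]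

lemma eLpNorm_comp_smul (g : V → E) {c : ℝ} (hc : c ≠ 0) {p : ℝ≥0∞} (hp : p ≠ ∞) :
    eLpNorm (fun x ↦ g (c • x)) p μ =
      ENNReal.ofReal |(c ^ Module.finrank ℝ V)⁻¹| ^ (1 / p).toReal * eLpNorm g p μ := by
  have hemb : MeasurableEmbedding (c • · : V → V) :=
    (Homeomorph.smulOfNeZero c hc).measurableEmbedding
  rw [← smul_eq_mul, ← eLpNorm_smul_measure_of_ne_top hp, ← Measure.map_addHaar_smul μ hc,
    hemb.eLpNorm_map_measure]
  rfl

variable {μ}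

lemma tendsto_eLpNorm_comp_smul_zero {ι : Type*} {l : Filter ι} {u : ι → V → E} {p : ℝ≥0∞}
    (hu : Tendsto (fun i ↦ eLpNorm (u i) p μ) l (𝓝 0)) (hp : p ≠ ∞) {c : ℝ} (hc : c ≠ 0) :
    Tendsto (fun i ↦ eLpNorm (fun x ↦ u i (c • x)) p μ) l (𝓝 0) := by
  simp only [eLpNorm_comp_smul μ _ hc hp]
  rw [← mul_zero (ENNReal.ofReal |(c ^ Module.finrank ℝ V)⁻¹| ^ (1 / p).toReal)]
  exact ENNReal.Tendsto.const_mul hu (Or.inr <|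
    ENNReal.rpow_ne_top_of_nonneg ENNReal.toReal_nonneg ENNReal.ofReal_ne_top)

lemma memLp_comp_smul {g : V → E} {p : ℝ≥0∞} (hg : MemLp g p μ) {c : ℝ} (hc : c ≠ 0) :
    MemLp (fun x ↦ g (c • x)) p μ := by
  have hemb : MeasurableEmbedding (c • · : V → V) :=
    (Homeomorph.smulOfNeZero c hc).measurableEmbedding
  refine hemb.memLp_map_measure_iff.1 ?_
  rw [Measure.map_addHaar_smul μ hc]
  exact hg.smul_measure ENNReal.ofReal_ne_top

end AddHaar

section FourierL2

variable {V F : Type*} [NormedAddCommGroup V] [InnerProductSpace ℝ V] [FiniteDimensional ℝ V]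
  [MeasurableSpace V] [BorelSpace V] [NormedAddCommGroup F]

lemma ae_eq_of_integral_schwartz_smul_eq [NormedSpace ℂ F] [CompleteSpace F] {u v : V → F}
    (hu : LocallyIntegrable u) (hv : LocallyIntegrable v)
    (huv : ∀ φ : 𝓢(V, ℂ), ∫ x, φ x • u x = ∫ x, φ x • v x) : u =ᵐ[volume] v := by
  refine ae_eq_of_integral_contDiff_smul_eq hu hv fun φ φ_smooth φ_supp ↦ ?_
  have ψ_supp : HasCompactSupport (Complex.ofRealCLM ∘ φ) := φ_supp.comp_left rfl
  have ψ_smooth : ContDiff ℝ (⊤ : ℕ∞) (Complex.ofRealCLM ∘ φ) := by fun_prop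
  simpa using huv (ψ_supp.toSchwartzMap ψ_smooth)

lemma continuous_fourier_of_integrable [NormedSpace ℂ F] {h : V → F} (h1 : Integrable h) :
    Continuous (𝓕 h) :=
  VectorFourier.fourierIntegral_continuous Real.continuous_fourierChar
    (innerSL ℝ).continuous₂ h1

lemma continuous_fourierInv_of_integrable [NormedSpace ℂ F] {h : V → F} (h1 : Integrable h) :
    Continuous (𝓕⁻ h) := by
  simpa only [← Real.fourierInv_eq_fourier_comp_neg]
    using continuous_fourier_of_integrable h1.comp_neg

lemma integral_fourier_smul_eq [NormedSpace ℂ F] [CompleteSpace F] {g : V → ℂ} {h : V → F}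
    (hg : Integrable g) (hh : Integrable h) : ∫ x, 𝓕 g x • h x = ∫ x, g x • 𝓕 h x := by
  simpa using! VectorFourier.integral_fourierIntegral_smul_eq_flip (L := innerₗ V)
    Real.continuous_fourierChar continuous_inner hg hh

lemma integral_fourierInv_smul_eq [NormedSpace ℂ F] [CompleteSpace F] {g : V → ℂ} {h : V → F}
    (hg : Integrable g) (hh : Integrable h) : ∫ x, 𝓕⁻ g x • h x = ∫ x, g x • 𝓕⁻ h x := by
  rw [Real.fourierInv_eq_fourier_comp_neg g, integral_fourier_smul_eq hg.comp_neg hh,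
    ← integral_neg_eq_self]
  simp only [neg_neg, Real.fourierInv_eq_fourier_neg]

variable [InnerProductSpace ℂ F] [CompleteSpace F]

lemma coeFn_fourier_toLp {h : V → F} (h1 : Integrable h) (h2 : MemLp h 2) :
    (𝓕 (h2.toLp h) : Lp F 2 (volume : Measure V)) =ᵐ[volume] 𝓕 h := by
  refine ae_eq_of_integral_schwartz_smul_eq ((Lp.memLp _).locallyIntegrable one_le_two)
    (continuous_fourier_of_integrable h1).locallyIntegrable fun φ ↦ ?_
  rw [← integral_fourier_smul_eq φ.integrable h1, ← Lp.toTemperedDistribution_apply,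
    ← Lp.fourier_toTemperedDistribution_eq, TemperedDistribution.fourier_apply,
    Lp.toTemperedDistribution_apply, SchwartzMap.fourier_coe]
  exact integral_congr_ae (h2.coeFn_toLp.mono fun x hx ↦ congrArg (𝓕 (φ : V → ℂ) x • ·) hx)

lemma coeFn_fourierInv_toLp {h : V → F} (h1 : Integrable h) (h2 : MemLp h 2) :
    (𝓕⁻ (h2.toLp h) : Lp F 2 (volume : Measure V)) =ᵐ[volume] 𝓕⁻ h := by
  refine ae_eq_of_integral_schwartz_smul_eq ((Lp.memLp _).locallyIntegrable one_le_two)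
    (continuous_fourierInv_of_integrable h1).locallyIntegrable fun φ ↦ ?_
  rw [← integral_fourierInv_smul_eq φ.integrable h1, ← Lp.toTemperedDistribution_apply,
    ← Lp.fourierInv_toTemperedDistribution_eq, TemperedDistribution.fourierInv_apply,
    Lp.toTemperedDistribution_apply, SchwartzMap.fourierInv_coe]
  exact integral_congr_ae (h2.coeFn_toLp.mono fun x hx ↦ congrArg (𝓕⁻ (φ : V → ℂ) x • ·) hx)

/-- The Plancherel Fourier transform of `f ∈ L²(V)` with kernel `e^{-2πi⟨x, ξ⟩}`, as a function
defined up to null sets: a representative of Mathlib's transform on `Lp F 2`. -/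
def l2Fourier {f : V → F} (hf : MemLp f 2) : V → F :=
  (𝓕 (hf.toLp f) : Lp F 2 (volume : Measure V))

lemma memLp_l2Fourier {f : V → F} (hf : MemLp f 2) : MemLp (l2Fourier hf) 2 := Lp.memLp _

lemma integral_norm_sq_l2Fourier {f : V → F} (hf : MemLp f 2) :
    ∫ ξ, ‖l2Fourier hf ξ‖ ^ 2 = ∫ x, ‖f x‖ ^ 2 := by
  rw [← norm_sq_toLp_two (memLp_l2Fourier hf), ← norm_sq_toLp_two hf]
  simp only [l2Fourier, Lp.toLp_coeFn, Lp.norm_fourier_eq]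

lemma eLpNorm_fourier_sub_l2Fourier {f g : V → F} (hf : MemLp f 2) (hg1 : Integrable g)
    (hg2 : MemLp g 2) : eLpNorm (𝓕 g - l2Fourier hf) 2 volume = eLpNorm (g - f) 2 volume := by
  rw [← Lp.edist_toLp_toLp g f hg2 hf,
    ← (Lp.fourierTransformₗᵢ V F).edist_map (hg2.toLp g) (hf.toLp f), Lp.edist_def]
  exact eLpNorm_congr_ae ((coeFn_fourier_toLp hg1 hg2).symm.sub (EventuallyEq.refl _ _))

lemma fourierInv_toLp_l2Fourier {f : V → F} (hf : MemLp f 2) :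
    𝓕⁻ ((memLp_l2Fourier hf).toLp (l2Fourier hf)) = hf.toLp f := by
  simp only [l2Fourier, Lp.toLp_coeFn, FourierTransform.fourierInv_fourier_eq]

lemma fourierInv_l2Fourier {f : V → F} (hf : MemLp f 2) (hf_cont : Continuous f)
    (hint : Integrable (l2Fourier hf)) : 𝓕⁻ (l2Fourier hf) = f := by
  refine (Continuous.ae_eq_iff_eq volume (continuous_fourierInv_of_integrable hint) hf_cont).1 ?_
  have h := coeFn_fourierInv_toLp hint (memLp_l2Fourier hf)
  rw [fourierInv_toLp_l2Fourier] at h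
  exact h.symm.trans hf.coeFn_toLp

end FourierL2

section Normalization

variable {d : ℕ} {f fhat : EuclideanSpace ℝ (Fin d) → ℂ}

lemma fourier_indicator_closedBall (f : EuclideanSpace ℝ (Fin d) → ℂ) (R : ℝ)
    (η : EuclideanSpace ℝ (Fin d)) :
    𝓕 ((closedBall 0 R).indicator f) η =
      ((2 * Real.pi) ^ ((d : ℝ) / 2) : ℝ) * truncFT d f R ((2 * Real.pi) • η) := by
  have const_mul : (2 * Real.pi) ^ ((d : ℝ) / 2) * (2 * Real.pi) ^ (-(d : ℝ) / 2) = 1 := by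
    rw [← Real.rpow_add (by positivity), neg_div, add_neg_cancel, Real.rpow_zero]
  rw [truncFT, ← mul_assoc, ← Complex.ofReal_mul, const_mul, Complex.ofReal_one, one_mul,
    Real.fourier_eq', ← integral_indicator isClosed_closedBall.measurableSet]
  congr 1 with x
  by_cases hx : x ∈ closedBall 0 R
  · simp only [Set.indicator_of_mem hx, inner_smul_right, smul_eq_mul]
    push_cast
    ring_nf
  · simp only [Set.indicator_of_notMem hx, smul_zero]

lemma IsL2Fourier.tendsto_eLpNorm_fourier_indicator_sub (hFT : IsL2Fourier d f fhat) :
    Tendsto (fun R : ℝ ↦ eLpNorm (𝓕 ((closedBall 0 R).indicator f) -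
      fun η ↦ ((2 * Real.pi) ^ ((d : ℝ) / 2) : ℝ) * fhat ((2 * Real.pi) • η)) 2 volume)
      atTop (𝓝 0) := by
  set c : ℂ := (((2 * Real.pi) ^ ((d : ℝ) / 2) : ℝ) : ℂ)
  have eLpNorm_eq (R : ℝ) : eLpNorm (𝓕 ((closedBall 0 R).indicator f) -
      fun η ↦ c * fhat ((2 * Real.pi) • η)) 2 volume =
      ‖c‖ₑ * eLpNorm (fun η ↦ fhat ((2 * Real.pi) • η) -
        truncFT d f R ((2 * Real.pi) • η)) 2 volume := by
    rw [← eLpNorm_const_smul, ← eLpNorm_neg]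
    congr 1 with η
    simp only [Pi.neg_apply, Pi.sub_apply, Pi.smul_apply, fourier_indicator_closedBall, c,
      smul_eq_mul]
    ring
  simp only [eLpNorm_eq]
  rw [← mul_zero ‖c‖ₑ]
  exact ENNReal.Tendsto.const_mul
    (tendsto_eLpNorm_comp_smul_zero hFT.2 ENNReal.ofNat_ne_top Real.two_pi_pos.ne')
    (Or.inr enorm_ne_top)

lemma IsL2Fourier.l2Fourier_ae_eq (hFT : IsL2Fourier d f fhat) (hf : MemLp f 2) :
    l2Fourier hf =ᵐ[volume]
      fun η ↦ ((2 * Real.pi) ^ ((d : ℝ) / 2) : ℝ) * fhat ((2 * Real.pi) • η) := by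
  have hball (R : ℝ) : MeasurableSet (closedBall (0 : EuclideanSpace ℝ (Fin d)) R) :=
    isClosed_closedBall.measurableSet
  have trunc_integrable (R : ℝ) : Integrable ((closedBall 0 R).indicator f) :=
    (integrable_indicator_iff (hball R)).2 <|
      (hf.locallyIntegrable one_le_two).integrableOn_isCompact (isCompact_closedBall 0 R)
  have trunc_measurable (R : ℝ) : AEStronglyMeasurable (𝓕 ((closedBall 0 R).indicator f)) :=
    (continuous_fourier_of_integrable (trunc_integrable R)).aestronglyMeasurable
  have tendsto_l2Fourier : Tendsto
      (fun R : ℝ ↦ eLpNorm (𝓕 ((closedBall 0 R).indicator f) - l2Fourier hf) 2 volume)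
      atTop (𝓝 0) := by
    simp only [eLpNorm_fourier_sub_l2Fourier hf (trunc_integrable _) (hf.indicator (hball _))]
    exact tendsto_eLpNorm_sub_indicator (aecover_closedBall tendsto_id) hf ENNReal.ofNat_ne_top
  exact tendstoInMeasure_ae_unique
    (tendstoInMeasure_of_tendsto_eLpNorm two_ne_zero trunc_measurable
      (memLp_l2Fourier hf).1 tendsto_l2Fourier)
    (tendstoInMeasure_of_tendsto_eLpNorm two_ne_zero trunc_measurable
      ((memLp_comp_smul hFT.1 Real.two_pi_pos.ne').const_mul _).1
      hFT.tendsto_eLpNorm_fourier_indicator_sub)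

end Normalization

section Cube

/-- The half-open cube `(-L/2, L/2]^d`, which agrees up to a null set with `Qcube d (L / 2)` and is
a fundamental domain for the translations by `Lℤ^d`. -/
def halfOpenCube (d : ℕ) (L : ℝ) : Set (EuclideanSpace ℝ (Fin d)) :=
  {ξ | ∀ j, ξ j ∈ Set.Ioc (-(L / 2)) (L / 2)}

lemma preimage_toLp_halfOpenCube (d : ℕ) (L : ℝ) :
    WithLp.toLp 2 ⁻¹' halfOpenCube d L = Set.univ.pi fun _ ↦ Set.Ioc (-(L / 2)) (L / 2) := by
  ext y
  simp [halfOpenCube]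

lemma measurableSet_halfOpenCube (d : ℕ) (L : ℝ) : MeasurableSet (halfOpenCube d L) := by
  rw [← (MeasurableEquiv.toLp 2 (Fin d → ℝ)).measurableSet_preimage]
  exact preimage_toLp_halfOpenCube d L ▸ MeasurableSet.univ_pi fun _ ↦ measurableSet_Ioc

lemma volume_halfOpenCube_lt_top (d : ℕ) (L : ℝ) : volume (halfOpenCube d L) < ∞ := by
  rw [← (PiLp.volume_preserving_toLp (Fin d)).measure_preimage
    (measurableSet_halfOpenCube d L).nullMeasurableSet, preimage_toLp_halfOpenCube,
    Real.volume_pi_Ioc]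
  exact ENNReal.prod_lt_top fun _ _ ↦ ENNReal.ofReal_lt_top

instance isFiniteMeasure_restrict_halfOpenCube (d : ℕ) (L : ℝ) :
    IsFiniteMeasure (volume.restrict (halfOpenCube d L)) :=
  isFiniteMeasure_restrict.2 (volume_halfOpenCube_lt_top d L).ne

lemma ae_mem_halfOpenCube_of_mem_Qcube (d : ℕ) (L : ℝ) :
    ∀ᵐ ξ, ξ ∈ Qcube d (L / 2) → ξ ∈ halfOpenCube d L := by
  have off_face : ∀ᵐ y : Fin d → ℝ, ∀ j, y j ≠ -(L / 2) := ae_all_iff.2 fun j ↦ by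
    simpa [ae_iff, volume_pi] using
      Measure.pi_hyperplane (fun _ : Fin d ↦ (volume : Measure ℝ)) j (-(L / 2))
  filter_upwards [(PiLp.volume_preserving_ofLp (Fin d)).quasiMeasurePreserving.ae off_face]
    with ξ hface hξ j
  exact ⟨(abs_le.1 (hξ j)).1.lt_of_ne' (hface j), (abs_le.1 (hξ j)).2⟩

end Cube

section FourierSeries

attribute [local instance] instMeasureSpaceUnitAddCircle

open UnitAddTorus

lemma mFourierCoeff_congr_ae {ι E : Type*} [Fintype ι] [NormedAddCommGroup E] [NormedSpace ℂ E]
    {H K : UnitAddTorus ι → E} (h : H =ᵐ[volume] K) : mFourierCoeff H = mFourierCoeff K :=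
  funext fun n ↦ integral_congr_ae (h.mono fun θ hθ ↦ congrArg (mFourier (-n) θ • ·) hθ)

lemma tendsto_eLpNorm_sub_sum_mFourier {ι : Type*} [Fintype ι] {H : UnitAddTorus ι → ℂ}
    (hH : MemLp H 2) :
    Tendsto (fun s : Finset (ι → ℤ) ↦
      eLpNorm (fun θ ↦ H θ - ∑ n ∈ s, mFourierCoeff H n * mFourier n θ) 2 volume)
      atTop (𝓝 0) := by
  have hterm (n : ι → ℤ) : MemLp (fun θ ↦ mFourierCoeff H n * mFourier n θ) 2 :=
    ((Lp.memLp (mFourierLp 2 n)).ae_eq (coeFn_mFourierLp 2 n)).const_mul _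
  refine (hasSum_toLp_iff_tendsto_eLpNorm hterm hH).1 ?_
  convert hasSum_mFourier_series_L2 (hH.toLp H) using 2 with n
  rw [mFourierCoeff_congr_ae hH.coeFn_toLp]
  refine Lp.ext ?_
  filter_upwards [(hterm n).coeFn_toLp, coeFn_mFourierLp 2 n,
    Lp.coeFn_smul (mFourierCoeff H n) (mFourierLp 2 n)] with θ h1 h2 h3
  rw [h1, h3, Pi.smul_apply, h2, smul_eq_mul]

lemma hasSum_norm_sq_mFourierCoeff {ι : Type*} [Fintype ι] {H : UnitAddTorus ι → ℂ}
    (hH : MemLp H 2) : HasSum (fun n ↦ ‖mFourierCoeff H n‖ ^ 2) (∫ θ, ‖H θ‖ ^ 2) := by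
  have hcongr := hH.coeFn_toLp
  convert hasSum_sq_mFourierCoeff (hH.toLp H) using 1
  · simp only [mFourierCoeff_congr_ae hcongr]
  · exact integral_congr_ae (hcongr.mono fun θ hθ ↦ by simp only [hθ])

end FourierSeries

section CubeFourierSeries

attribute [local instance] instMeasureSpaceUnitAddCircle

open UnitAddTorus

/-- The section `(ℝ/ℤ)^d → (-L/2, L/2]^d` of the quotient map `ξ ↦ ξ / L`, through which Fourier
series on the torus become Fourier series on the cube. -/
def torusToCube (d : ℕ) (L : ℝ) (θ : UnitAddTorus (Fin d)) : EuclideanSpace ℝ (Fin d) :=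
  L • WithLp.toLp 2 (measurableEquivPiIoc (fun _ ↦ -(1 / 2)) θ).1

lemma measurePreserving_smul_toLp (d : ℕ) {L : ℝ} (hL : 0 < L) :
    MeasurePreserving (fun y : Fin d → ℝ ↦ L • WithLp.toLp 2 y)
      (ENNReal.ofReal (L ^ d) • volume) volume := by
  have hsmul : MeasurePreserving (L • · : EuclideanSpace ℝ (Fin d) → _)
      (ENNReal.ofReal (L ^ d) • volume) volume := by
    refine ⟨measurable_const_smul L, ?_⟩
    rw [Measure.map_smul, Measure.map_addHaar_smul volume hL.ne', smul_smul,
      finrank_euclideanSpace_fin, ← ENNReal.ofReal_mul (by positivity),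
      abs_of_pos (by positivity), mul_inv_cancel₀ (by positivity), ENNReal.ofReal_one, one_smul]
  exact hsmul.comp ((PiLp.volume_preserving_toLp (Fin d)).smul_measure _)

lemma preimage_smul_toLp_halfOpenCube (d : ℕ) {L : ℝ} (hL : 0 < L) :
    (fun y : Fin d → ℝ ↦ L • WithLp.toLp 2 y) ⁻¹' halfOpenCube d L =
      {y | ∀ j, y j ∈ Set.Ioc (-(1 / 2)) (-(1 / 2) + 1)} := by
  ext y
  refine forall_congr' fun j ↦ ?_
  simp only [PiLp.smul_apply, smul_eq_mul, Set.mem_Ioc]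
  constructor <;> rintro ⟨h1, h2⟩ <;> constructor <;> nlinarith

lemma measurePreserving_torusToCube (d : ℕ) {L : ℝ} (hL : 0 < L) :
    MeasurePreserving (torusToCube d L) (ENNReal.ofReal (L ^ d) • volume)
      (volume.restrict (halfOpenCube d L)) := by
  have hunit : MeasurableSet {y : Fin d → ℝ | ∀ j, y j ∈ Set.Ioc (-(1 / 2)) (-(1 / 2) + 1)} :=
    MeasurableSet.univ_pi' fun _ ↦ measurableSet_Ioc
  have hscale := (measurePreserving_smul_toLp d hL).restrict_preimage
    (measurableSet_halfOpenCube d L)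
  rw [preimage_smul_toLp_halfOpenCube d hL, Measure.restrict_smul] at hscale
  exact hscale.comp (((measurePreserving_subtype_coe hunit).comp
    (measurePreserving_equivPiIoc fun _ : Fin d ↦ (-(1 / 2) : ℝ))).smul_measure _)

lemma torusToCube_mem_halfOpenCube {d : ℕ} {L : ℝ} (hL : 0 < L) (θ : UnitAddTorus (Fin d)) :
    torusToCube d L θ ∈ halfOpenCube d L :=
  (preimage_smul_toLp_halfOpenCube d hL).ge (measurableEquivPiIoc (fun _ ↦ -(1 / 2)) θ).2

lemma fourierChar_inner_torusToCube {d : ℕ} {L : ℝ} (hL : L ≠ 0) (n : Fin d → ℤ)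
    (θ : UnitAddTorus (Fin d)) :
    (Real.fourierChar ⟪torusToCube d L θ, latticePt d L n⟫_ℝ : ℂ) = mFourier n θ := by
  set y := measurableEquivPiIoc (fun _ ↦ (-(1 / 2) : ℝ)) θ with hy
  have hθ (j : Fin d) : θ j = (y.1 j : UnitAddCircle) :=
    (congrFun ((measurableEquivPiIoc fun _ ↦ (-(1 / 2) : ℝ)).symm_apply_apply θ) j).symm
  have inner_eq : ⟪torusToCube d L θ, latticePt d L n⟫_ℝ = ∑ j, n j * y.1 j := by
    simp only [torusToCube, latticePt, PiLp.inner_apply, PiLp.smul_apply, ← hy, smul_eq_mul,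
      RCLike.inner_apply, conj_trivial]
    exact Finset.sum_congr rfl fun j _ ↦ by field_simp
  simp only [mFourier, ContinuousMap.coe_mk, hθ, fourier_coe_apply, ← Complex.exp_sum,
    Real.fourierChar_apply, inner_eq]
  push_cast
  simp only [Finset.mul_sum, Finset.sum_mul, div_one]
  congr! 2 with j
  ring

lemma integral_comp_torusToCube {E : Type*} [NormedAddCommGroup E] [NormedSpace ℝ E] {d : ℕ}
    {L : ℝ} (hL : 0 < L) {K : EuclideanSpace ℝ (Fin d) → E} (hK : AEStronglyMeasurable K)
    (hK0 : ∀ᵐ ξ, ξ ∉ halfOpenCube d L → K ξ = 0) :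
    L ^ d • ∫ θ, K (torusToCube d L θ) = ∫ ξ, K ξ := by
  have hq := measurePreserving_torusToCube d hL
  rw [← setIntegral_eq_integral_of_ae_compl_eq_zero hK0, ← hq.map_eq,
    integral_map hq.aemeasurable (by rw [hq.map_eq]; exact hK.restrict), integral_smul_measure,
    ENNReal.toReal_ofReal (by positivity)]

lemma eLpNorm_comp_torusToCube {E : Type*} [NormedAddCommGroup E] {d : ℕ} {L : ℝ} (hL : 0 < L)
    {K : EuclideanSpace ℝ (Fin d) → E} (hK : AEStronglyMeasurable K)
    (hK0 : ∀ᵐ ξ, ξ ∉ halfOpenCube d L → K ξ = 0) {p : ℝ≥0∞} (hp : p ≠ ∞) :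
    ENNReal.ofReal (L ^ d) ^ (1 / p).toReal * eLpNorm (fun θ ↦ K (torusToCube d L θ)) p volume =
      eLpNorm K p volume := by
  have hind : (halfOpenCube d L).indicator K =ᵐ[volume] K := by
    filter_upwards [hK0] with ξ hξ
    exact Set.indicator_apply_eq_self.2 hξ
  rw [← eLpNorm_congr_ae hind, eLpNorm_indicator_eq_eLpNorm_restrict
    (measurableSet_halfOpenCube d L), ← smul_eq_mul, ← eLpNorm_smul_measure_of_ne_top hp]
  exact eLpNorm_comp_measurePreserving hK.restrict (measurePreserving_torusToCube d hL)

lemma memLp_comp_torusToCube {E : Type*} [NormedAddCommGroup E] {d : ℕ} {L : ℝ} (hL : 0 < L)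
    {K : EuclideanSpace ℝ (Fin d) → E} {p : ℝ≥0∞} (hK : MemLp K p) :
    MemLp (fun θ ↦ K (torusToCube d L θ)) p := by
  have hc : ENNReal.ofReal (L ^ d) ≠ 0 := (ENNReal.ofReal_pos.2 (pow_pos hL d)).ne'
  have hmem := ((hK.restrict _).comp_measurePreserving
    (measurePreserving_torusToCube d hL)).smul_measure (ENNReal.inv_ne_top.2 hc)
  rwa [smul_smul, ENNReal.inv_mul_cancel hc ENNReal.ofReal_ne_top, one_smul] at hmem

lemma mFourierCoeff_comp_torusToCube {d : ℕ} {L : ℝ} (hL : 0 < L)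
    {G : EuclideanSpace ℝ (Fin d) → ℂ} (hG : AEStronglyMeasurable G)
    (hG0 : ∀ᵐ ξ, ξ ∉ halfOpenCube d L → G ξ = 0) (n : Fin d → ℤ) :
    mFourierCoeff (fun θ ↦ G (torusToCube d L θ)) (-n) =
      ((L ^ d)⁻¹ : ℝ) * 𝓕⁻ G (latticePt d L n) := by
  have hchar : Continuous fun ξ ↦ (Real.fourierChar ⟪ξ, latticePt d L n⟫_ℝ : ℂ) := by fun_prop
  have transfer := integral_comp_torusToCube hL (hchar.aestronglyMeasurable.mul hG) <| by
    filter_upwards [hG0] with ξ hξ hmem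
    simp only [Pi.mul_apply, hξ hmem, mul_zero]
  simp only [Pi.mul_apply, fourierChar_inner_torusToCube hL.ne', Complex.real_smul] at transfer
  simp only [Real.fourierInv_eq, Circle.smul_def, smul_eq_mul, mFourierCoeff, neg_neg,
    ← transfer]
  rw [← mul_assoc, ← Complex.ofReal_mul, inv_mul_cancel₀ (by positivity), Complex.ofReal_one,
    one_mul]

/-- The exponential `e^{-2πi⟨ξ, n/L⟩}` cut off to the cube, normalized so that its inverse Fourier
transform is `fN d L n`. -/
def cubeChar (d : ℕ) (L : ℝ) (n : Fin d → ℤ) : EuclideanSpace ℝ (Fin d) → ℂ :=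
  (halfOpenCube d L).indicator fun ξ ↦
    ((L ^ d)⁻¹ : ℝ) * Real.fourierChar (-⟪ξ, latticePt d L n⟫_ℝ)

lemma memLp_cubeChar (d : ℕ) (L : ℝ) (n : Fin d → ℤ) (p : ℝ≥0∞) : MemLp (cubeChar d L n) p := by
  rw [cubeChar, memLp_indicator_iff_restrict (measurableSet_halfOpenCube d L)]
  have hcont : Continuous fun ξ : EuclideanSpace ℝ (Fin d) ↦
    (((L ^ d)⁻¹ : ℝ) * Real.fourierChar (-⟪ξ, latticePt d L n⟫_ℝ) : ℂ) := by fun_prop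
  exact MemLp.of_bound hcont.aestronglyMeasurable ‖(L ^ d)⁻¹‖ <| .of_forall fun ξ ↦ by
    rw [norm_mul, Circle.norm_coe, mul_one, Complex.norm_real]

lemma cubeChar_torusToCube {d : ℕ} {L : ℝ} (hL : 0 < L) (n : Fin d → ℤ)
    (θ : UnitAddTorus (Fin d)) :
    cubeChar d L n (torusToCube d L θ) = ((L ^ d)⁻¹ : ℝ) * mFourier (-n) θ := by
  rw [cubeChar, Set.indicator_of_mem (torusToCube_mem_halfOpenCube hL θ), AddChar.map_neg_eq_inv,
    Circle.coe_inv_eq_conj, fourierChar_inner_torusToCube hL.ne', mFourier_neg]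

lemma hasSumL2_fourierInv_mul_cubeChar {d : ℕ} {L : ℝ} (hL : 0 < L)
    {G : EuclideanSpace ℝ (Fin d) → ℂ} (hG : MemLp G 2)
    (hG0 : ∀ᵐ ξ, ξ ∉ halfOpenCube d L → G ξ = 0) :
    HasSumL2 d (fun n ξ ↦ 𝓕⁻ G (latticePt d L n) * cubeChar d L n ξ) G := by
  have remainder_eq (s : Finset (Fin d → ℤ)) :
      eLpNorm (fun ξ ↦ G ξ - ∑ n ∈ s, 𝓕⁻ G (latticePt d L n) * cubeChar d L n ξ) 2 volume =
        ENNReal.ofReal (L ^ d) ^ (1 / (2 : ℝ≥0∞)).toReal *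
          eLpNorm (fun θ ↦ G (torusToCube d L θ) - ∑ n ∈ s.image Neg.neg,
            mFourierCoeff (fun θ ↦ G (torusToCube d L θ)) n * mFourier n θ) 2 volume := by
    rw [← eLpNorm_comp_torusToCube hL _ _ ENNReal.ofNat_ne_top]
    · simp only [cubeChar_torusToCube hL, Finset.sum_image neg_injective.injOn,
        mFourierCoeff_comp_torusToCube hL hG.1 hG0]
      congr! 5 with θ
      ring_nf
    · exact (hG.sub (memLp_finsetSum s fun n _ ↦ (memLp_cubeChar d L n 2).const_mul _)).1
    · filter_upwards [hG0] with ξ hξ hmem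
      simp [hξ hmem, cubeChar, hmem]
  simp only [HasSumL2, remainder_eq]
  rw [← mul_zero (ENNReal.ofReal (L ^ d) ^ (1 / (2 : ℝ≥0∞)).toReal)]
  exact ENNReal.Tendsto.const_mul
    ((tendsto_eLpNorm_sub_sum_mFourier (memLp_comp_torusToCube hL hG)).comp
      (tendsto_finset_image_atTop_atTop neg_neg))
    (Or.inr <| ENNReal.rpow_ne_top_of_nonneg ENNReal.toReal_nonneg ENNReal.ofReal_ne_top)

lemma hasSum_norm_sq_fourierInv {d : ℕ} {L : ℝ} (hL : 0 < L)
    {G : EuclideanSpace ℝ (Fin d) → ℂ} (hG : MemLp G 2)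
    (hG0 : ∀ᵐ ξ, ξ ∉ halfOpenCube d L → G ξ = 0) :
    HasSum (fun n ↦ ‖𝓕⁻ G (latticePt d L n)‖ ^ 2) (L ^ d * ∫ ξ, ‖G ξ‖ ^ 2) := by
  have parseval := (Equiv.neg _).hasSum_iff.2 (hasSum_norm_sq_mFourierCoeff
    (memLp_comp_torusToCube hL hG))
  have transfer := integral_comp_torusToCube hL (hG.1.norm.pow 2) <| by
    filter_upwards [hG0] with ξ hξ hmem
    simp [hξ hmem]
  simp only [Pi.pow_apply, smul_eq_mul] at transfer
  have coeff_sq (n : Fin d → ℤ) : ‖𝓕⁻ G (latticePt d L n)‖ ^ 2 =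
      (L ^ d) ^ 2 * ‖mFourierCoeff (fun θ ↦ G (torusToCube d L θ)) (-n)‖ ^ 2 := by
    rw [mFourierCoeff_comp_torusToCube hL hG.1 hG0, norm_mul, Complex.norm_real, norm_inv,
      Real.norm_of_nonneg (pow_pos hL d).le]
    field_simp
  simp only [coeff_sq, ← transfer, ← mul_assoc, ← sq]
  exact parseval.mul_left _

end CubeFourierSeries

section Sinc

lemma intervalIntegral_fourierChar_mul (L y : ℝ) :
    ∫ t in -(L / 2)..(L / 2), (Real.fourierChar (t * y) : ℂ) =
      L * Real.sinc (Real.pi * (L * y)) := by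
  rcases eq_or_ne y 0 with rfl | hy
  · simp
  have hc : ((2 * Real.pi * y : ℝ) : ℂ) ≠ 0 := Complex.ofReal_ne_zero.2 (by positivity)
  have hr : L / 2 * (2 * Real.pi * y) = Real.pi * (L * y) := by ring
  have subst := intervalIntegral.smul_integral_comp_mul_right (a := -(L / 2)) (b := L / 2)
    (fun t : ℝ ↦ Complex.exp (t * Complex.I)) (2 * Real.pi * y)
  rw [neg_mul, hr, integral_exp_mul_I_eq_sinc, Complex.real_smul] at subst
  have phase_eq (t : ℝ) : 2 * Real.pi * (t * y) = t * (2 * Real.pi * y) := by ring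
  refine mul_left_cancel₀ hc ?_
  simp only [Real.fourierChar_apply, phase_eq, subst]
  push_cast
  ring

lemma setIntegral_fourierChar_inner_halfOpenCube {d : ℕ} {L : ℝ} (hL : 0 ≤ L)
    (w : EuclideanSpace ℝ (Fin d)) :
    ∫ ξ in halfOpenCube d L, (Real.fourierChar ⟪ξ, w⟫_ℝ : ℂ) =
      L ^ d * ∏ j, (Real.sinc (Real.pi * (L * w j)) : ℂ) := by
  have char_inner (y : Fin d → ℝ) : (Real.fourierChar ⟪WithLp.toLp 2 y, w⟫_ℝ : ℂ) =
      ∏ j, (Real.fourierChar (y j * w j) : ℂ) := by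
    simp only [Real.fourierChar_apply, ← Complex.exp_sum, PiLp.inner_apply, RCLike.inner_apply,
      conj_trivial, mul_comm]
    push_cast
    simp only [Finset.mul_sum]
  rw [← (PiLp.volume_preserving_toLp (Fin d)).setIntegral_preimage_emb
    (MeasurableEquiv.toLp 2 (Fin d → ℝ)).measurableEmbedding, preimage_toLp_halfOpenCube,
    volume_pi, Measure.restrict_pi_pi]
  simp only [char_inner]
  refine (integral_fintype_prod_eq_prod fun j t ↦ (Real.fourierChar (t * w j) : ℂ)).trans ?_
  simp only [← intervalIntegral.integral_of_le (show -(L / 2) ≤ L / 2 by linarith),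
    intervalIntegral_fourierChar_mul, Finset.prod_mul_distrib, Finset.prod_const, Finset.card_univ,
    Fintype.card_fin]

lemma fourierInv_cubeChar {d : ℕ} {L : ℝ} (hL : 0 < L) (n : Fin d → ℤ)
    (x : EuclideanSpace ℝ (Fin d)) : 𝓕⁻ (cubeChar d L n) x = fN d L n x := by
  have integrand_eq (ξ : EuclideanSpace ℝ (Fin d)) :
      Real.fourierChar ⟪ξ, x⟫_ℝ • cubeChar d L n ξ = (halfOpenCube d L).indicator
        (fun ξ ↦ ((L ^ d)⁻¹ : ℝ) * (Real.fourierChar ⟪ξ, x - latticePt d L n⟫_ℝ : ℂ)) ξ := by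
    by_cases hξ : ξ ∈ halfOpenCube d L
    · rw [cubeChar, Set.indicator_of_mem hξ, Set.indicator_of_mem hξ, inner_sub_right,
        sub_eq_add_neg, AddChar.map_add_eq_mul, Circle.coe_mul, Circle.smul_def, smul_eq_mul]
      exact mul_left_comm _ _ _
    · rw [cubeChar, Set.indicator_of_notMem hξ, Set.indicator_of_notMem hξ, smul_zero]
  have argument_eq (j : Fin d) : L * (x - latticePt d L n) j = L * x j - n j := by
    simp only [latticePt, PiLp.sub_apply]
    field_simp
  simp only [Real.fourierInv_eq, integrand_eq]
  rw [integral_indicator (measurableSet_halfOpenCube d L), integral_const_mul,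
    setIntegral_fourierChar_inner_halfOpenCube hL.le, ← mul_assoc, ← Complex.ofReal_pow,
    ← Complex.ofReal_mul, inv_mul_cancel₀ (pow_pos hL d).ne', Complex.ofReal_one, one_mul,
    ← Complex.ofReal_prod]
  simp only [argument_eq, fN]
  rfl

end Sinc

section Sampling

variable {d : ℕ} {L : ℝ} {f : EuclideanSpace ℝ (Fin d) → ℂ}

lemma integrable_of_ae_eq_zero_off_halfOpenCube {G : EuclideanSpace ℝ (Fin d) → ℂ}
    (hG : MemLp G 2) (hG0 : ∀ᵐ ξ, ξ ∉ halfOpenCube d L → G ξ = 0) : Integrable G := by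
  have hind : (halfOpenCube d L).indicator G =ᵐ[volume] G := by
    filter_upwards [hG0] with ξ hξ
    exact Set.indicator_apply_eq_self.2 hξ
  refine Integrable.congr ?_ hind
  exact (integrable_indicator_iff (measurableSet_halfOpenCube d L)).2
    ((hG.restrict _).integrable one_le_two)

lemma coeFn_fourierInv_toLp_const_mul_cubeChar (hL : 0 < L) (c : ℂ) (n : Fin d → ℤ) :
    (𝓕⁻ (((memLp_cubeChar d L n 2).const_mul c).toLp _) :
      Lp ℂ 2 (volume : Measure (EuclideanSpace ℝ (Fin d)))) =ᵐ[volume] fun x ↦ c * fN d L n x := by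
  refine (coeFn_fourierInv_toLp ((memLp_one_iff_integrable.1 (memLp_cubeChar d L n 1)).const_mul c)
    _).trans (.of_forall fun x ↦ ?_)
  have sinc_eq := fourierInv_cubeChar hL n x
  simp only [Real.fourierInv_eq] at sinc_eq ⊢
  rw [← sinc_eq, ← integral_const_mul]
  simp only [Circle.smul_def, smul_eq_mul, mul_left_comm]

theorem hasSumL2_sampling (hL : 0 < L) (hf_cont : Continuous f) (hf : MemLp f 2 volume)
    (hband : ∀ᵐ ξ, ξ ∉ halfOpenCube d L → l2Fourier hf ξ = 0) :
    HasSumL2 d (fun n x ↦ f (latticePt d L n) * (fN d L n x : ℂ)) f := by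
  have hG := memLp_l2Fourier hf
  have inversion := fourierInv_l2Fourier hf hf_cont
    (integrable_of_ae_eq_zero_off_halfOpenCube hG hband)
  have expansion := hasSumL2_fourierInv_mul_cubeChar hL hG hband
  rw [inversion] at expansion
  have hchar (n : Fin d → ℤ) := (memLp_cubeChar d L n 2).const_mul (f (latticePt d L n))
  have hsinc (n : Fin d → ℤ) : MemLp (fun x ↦ f (latticePt d L n) * (fN d L n x : ℂ)) 2 :=
    (Lp.memLp _).ae_eq (coeFn_fourierInv_toLp_const_mul_cubeChar hL (f (latticePt d L n)) n)
  refine (hasSum_toLp_iff_tendsto_eLpNorm hsinc hf).1 ?_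
  convert ((hasSum_toLp_iff_tendsto_eLpNorm hchar hG).2 expansion).mapL
    (fourierInvCLM ℂ (Lp ℂ 2 (volume : Measure (EuclideanSpace ℝ (Fin d))))) using 1
  · funext n
    exact Lp.ext ((hsinc n).coeFn_toLp.trans
      (coeFn_fourierInv_toLp_const_mul_cubeChar hL _ n).symm)
  · exact (fourierInv_toLp_l2Fourier hf).symm

theorem hasSum_norm_sq_sampling (hL : 0 < L) (hf_cont : Continuous f) (hf : MemLp f 2 volume)
    (hband : ∀ᵐ ξ, ξ ∉ halfOpenCube d L → l2Fourier hf ξ = 0) :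
    HasSum (fun n ↦ ‖f (latticePt d L n)‖ ^ 2) (L ^ d * ∫ x, ‖f x‖ ^ 2) := by
  have hG := memLp_l2Fourier hf
  rw [← integral_norm_sq_l2Fourier hf]
  simpa only [fourierInv_l2Fourier hf hf_cont
    (integrable_of_ae_eq_zero_off_halfOpenCube hG hband)]
    using hasSum_norm_sq_fourierInv hL hG hband

lemma IsL2Fourier.l2Fourier_eq_zero_off_halfOpenCube {fhat : EuclideanSpace ℝ (Fin d) → ℂ}
    (hFT : IsL2Fourier d f fhat) (hf : MemLp f 2 volume)
    (hsupp : ∀ᵐ ξ, ξ ∉ Qcube d (Real.pi * L) → fhat ξ = 0) :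
    ∀ᵐ η, η ∉ halfOpenCube d L → l2Fourier hf η = 0 := by
  have hsupp_smul : ∀ᵐ η, (2 * Real.pi) • η ∉ Qcube d (Real.pi * L) →
      fhat ((2 * Real.pi) • η) = 0 :=
    (Measure.quasiMeasurePreserving_smul volume Real.two_pi_pos.ne').ae hsupp
  have smul_mem {η : EuclideanSpace ℝ (Fin d)} (hη : (2 * Real.pi) • η ∈ Qcube d (Real.pi * L)) :
      η ∈ Qcube d (L / 2) := fun j ↦ by
    have hj := hη j
    rw [PiLp.smul_apply, smul_eq_mul, abs_mul, abs_of_pos Real.two_pi_pos] at hj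
    nlinarith [Real.pi_pos]
  filter_upwards [hFT.l2Fourier_ae_eq hf, hsupp_smul, ae_mem_halfOpenCube_of_mem_Qcube d L]
    with η heq hzero hmem hη
  rw [heq, hzero fun h ↦ hη (hmem (smul_mem h)), mul_zero]

end Sampling

/-- Shannon–Whittaker sampling theorem in `ℝ^d`: any `f ∈ 𝒫_N` (i.e. `f ∈ L²(ℝ^d)` with
`supp f̂ ⊆ Q_{πN}(0)`, values taken via the continuous representative) satisfies
`f = Σ_{n ∈ ℤ^d} f(n/N) f_{N,n}` in `L²(ℝ^d)` and
`∫ |f|² = N^{-d} Σ_{n ∈ ℤ^d} |f(n/N)|²`. -/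
theorem statement0 (d : ℕ) (hd : 1 ≤ d) (N : ℝ) (hN : 0 < N)
    (f fhat : EuclideanSpace ℝ (Fin d) → ℂ)
    (hcont : Continuous f) (hmem : MemLp f 2 volume)
    (hFT : IsL2Fourier d f fhat)
    (hsupp : ∀ᵐ ξ ∂(volume : Measure (EuclideanSpace ℝ (Fin d))),
      ξ ∉ Qcube d (Real.pi * N) → fhat ξ = 0) :
    HasSumL2 d (fun n x => f (latticePt d N n) * (fN d N n x : ℂ)) f ∧
    Summable (fun n : Fin d → ℤ => ‖f (latticePt d N n)‖ ^ 2) ∧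
    ∫ x, ‖f x‖ ^ 2 = N ^ (-(d : ℝ)) * ∑' n : Fin d → ℤ, ‖f (latticePt d N n)‖ ^ 2 := by
  have hband : ∀ᵐ η, η ∉ halfOpenCube d N → l2Fourier hmem η = 0 :=
    hFT.l2Fourier_eq_zero_off_halfOpenCube hmem hsupp
  have parseval := hasSum_norm_sq_sampling hN hcont hmem hband
  refine ⟨hasSumL2_sampling hN hcont hmem hband, parseval.summable, ?_⟩
  rw [parseval.tsum_eq, Real.rpow_neg hN.le, Real.rpow_natCast,
    inv_mul_cancel_left₀ (pow_pos hN d).ne']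
end
end

section
/- For every T > 0, every N > 0 and every m > 0, there exists u₀ ∈ L²(ℝ^d) with ‖u₀‖ ≤ 1 such that the heat solution u with initial datum u₀ satisfies ‖ u(T,·) − Σ_{n∈ℤ^d, |n|≤m} u(T, n/N) f_{N,n} ‖ ≥ (1/2)(T+1)^{-d/4}. In particular, the asymptotic observability identity fails if the sum is restricted to finitely many lattice points. -/
open MeasureTheory Filter Topology Metric ENNReal NNReal

noncomputable section

/-!
A solution that is small at the finitely many sampling points is reconstructed as a uniformly small
function, so the reconstruction error is then essentially the norm of the solution itself. Moving
the initial datum off to infinity makes the samples small without changing any norm. Starting from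
a wide unit Gaussian, for which the heat flow loses almost no `L²` norm, the error comes arbitrarily
close to `1`.
-/

section LpNorm

variable {α E : Type*} [MeasurableSpace α] {μ : Measure α} [NormedAddCommGroup E]
  {F : α → E} {p a : ℝ≥0∞}

theorem exists_pos_forall_lt_eLpNorm_sub (hF : AEStronglyMeasurable F μ)
    (ha : a < eLpNorm F p μ) :
    ∃ ε > 0, ∀ G : α → E, (∀ x, ‖G x‖ ≤ ε) → a < eLpNorm (fun x => F x - G x) p μ := by
  -- Fatou's lemma for the truncations `max (‖F‖ - ε) 0`, which bound every `‖F - G‖` from below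
  -- and, unlike `F - G`, are measurable whatever `G` is.
  let trunc (k : ℕ) (x : α) : ℝ := max (‖F x‖ - 1 / ((k : ℝ) + 1)) 0
  have trunc_meas (k : ℕ) : AEStronglyMeasurable (trunc k) μ :=
    (hF.norm.sub aestronglyMeasurable_const).sup aestronglyMeasurable_const
  have trunc_tendsto (x : α) : Tendsto (fun k => trunc k x) atTop (𝓝 ‖F x‖) := by
    simpa [trunc] using ((tendsto_one_div_add_atTop_nhds_zero_nat (𝕜 := ℝ)).const_sub ‖F x‖).max
      (tendsto_const_nhds (x := 0))
  have fatou : a < liminf (fun k => eLpNorm (trunc k) p μ) atTop :=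
    calc a < eLpNorm (fun x => ‖F x‖) p μ := by rwa [eLpNorm_norm]
      _ ≤ _ := Lp.eLpNorm_lim_le_liminf_eLpNorm trunc_meas _ (.of_forall trunc_tendsto)
  obtain ⟨k, hk⟩ := (eventually_lt_of_lt_liminf fatou).exists
  refine ⟨1 / ((k : ℝ) + 1), by positivity, fun G hG => hk.trans_le (eLpNorm_mono fun x => ?_)⟩
  rw [Real.norm_of_nonneg (le_max_right _ _)]
  refine max_le ?_ (norm_nonneg _)
  linarith [norm_sub_norm_le (F x) (G x), hG x]

end LpNorm

section Translation

variable {G : Type*} [AddGroup G]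

theorem eLpNorm_comp_sub_right {E : Type*} [NormedAddCommGroup E] [MeasurableSpace G]
    [MeasurableAdd G] {μ : Measure G} [μ.IsAddRightInvariant] {p : ℝ≥0∞} (F : G → E) (z : G) :
    eLpNorm (fun x => F (x - z)) p μ = eLpNorm F p μ :=
  calc eLpNorm (F ∘ MeasurableEquiv.subRight z) p μ
      = eLpNorm F p (μ.map (· - z)) :=
        ((MeasurableEquiv.subRight z).measurableEmbedding.eLpNorm_map_measure).symm
    _ = eLpNorm F p μ := by rw [map_sub_right_eq_self]

variable [TopologicalSpace G] [IsTopologicalAddGroup G]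

theorem tendsto_norm_comp_sub_left_cocompact {E : Type*} [SeminormedAddGroup E] {Φ : G → E}
    (hΦ : Tendsto Φ (cocompact G) (𝓝 0)) (q : G) :
    Tendsto (fun z => ‖Φ (q - z)‖) (cocompact G) (𝓝 0) := by
  simpa using (hΦ.comp (Homeomorph.subLeft q).isClosedEmbedding.tendsto_cocompact).norm

theorem exists_translate_lt_eLpNorm_sub_sum {R ι : Type*} [NonUnitalNormedRing R] {Φ : G → R}
    [NoncompactSpace G] [MeasurableSpace G] [BorelSpace G] {μ : Measure G}
    [μ.IsAddRightInvariant] (hΦ_meas : AEStronglyMeasurable Φ μ)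
    (hΦ : Tendsto Φ (cocompact G) (𝓝 0)) (s : Finset ι) (q : ι → G) {g : ι → G → R} {M : ι → ℝ}
    (hg : ∀ i ∈ s, ∀ x, ‖g i x‖ ≤ M i) {p a : ℝ≥0∞} (ha : a < eLpNorm Φ p μ) :
    ∃ z, a < eLpNorm (fun x => Φ (x - z) - ∑ i ∈ s, Φ (q i - z) * g i x) p μ := by
  obtain ⟨ε, hε, h_stable⟩ := exists_pos_forall_lt_eLpNorm_sub hΦ_meas ha
  have h_samples : Tendsto (fun z => ∑ i ∈ s, ‖Φ (q i - z)‖ * M i) (cocompact G) (𝓝 0) := by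
    simpa using tendsto_finsetSum s fun i _ =>
      (tendsto_norm_comp_sub_left_cocompact hΦ (q i)).mul_const (M i)
  obtain ⟨z, hz⟩ := (h_samples.eventually_lt_const hε).exists
  have h_small (x : G) : ‖∑ i ∈ s, Φ (q i - z) * g i (x + z)‖ ≤ ε :=
    calc _ ≤ ∑ i ∈ s, ‖Φ (q i - z)‖ * M i := norm_sum_le_of_le s fun i hi =>
          norm_mul_le_of_le le_rfl (hg i hi _)
      _ ≤ ε := hz.le
  refine ⟨z, (h_stable _ h_small).trans_eq ?_⟩
  rw [← eLpNorm_comp_sub_right _ z]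
  simp only [sub_add_cancel]

end Translation

section HeatKernel

/-- The heat kernel `(4πt)^{-d/2} e^{-|x|²/(4t)}` of `ℝ^d` at time `t > 0`. -/
def heatKernel (d : ℕ) (t : ℝ) (x : EuclideanSpace ℝ (Fin d)) : ℝ :=
  (4 * Real.pi * t) ^ (-(d : ℝ) / 2) * Real.exp (-‖x‖ ^ 2 / (4 * t))

variable {d : ℕ} {s t : ℝ}

theorem continuous_heatKernel : Continuous (heatKernel d t) := by
  unfold heatKernel
  fun_prop

theorem heatKernel_neg (x : EuclideanSpace ℝ (Fin d)) : heatKernel d t (-x) = heatKernel d t x := by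
  simp only [heatKernel, norm_neg]

theorem heatKernel_zero_right : heatKernel d t 0 = (4 * Real.pi * t) ^ (-(d : ℝ) / 2) := by
  simp [heatKernel]

theorem tendsto_heatKernel_cocompact (ht : 0 < t) :
    Tendsto (heatKernel d t) (cocompact _) (𝓝 0) := by
  have h_norm_sq : Tendsto (fun x : EuclideanSpace ℝ (Fin d) => ‖x‖ ^ 2 / (4 * t))
      (cocompact _) atTop :=
    ((tendsto_pow_atTop two_ne_zero).comp tendsto_norm_cocompact_atTop).atTop_div_const
      (by positivity)
  unfold heatKernel
  simpa [neg_div] using (Real.tendsto_exp_neg_atTop_nhds_zero.comp h_norm_sq).const_mul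
    ((4 * Real.pi * t) ^ (-(d : ℝ) / 2))

theorem integral_heatKernel (ht : 0 < t) : ∫ x, heatKernel d t x = 1 := by
  have h_gauss : ∫ x : EuclideanSpace ℝ (Fin d), Real.exp (-‖x‖ ^ 2 / (4 * t)) =
      (4 * Real.pi * t) ^ ((d : ℝ) / 2) := by
    have h := GaussianFourier.integral_rexp_neg_mul_sq_norm (V := EuclideanSpace ℝ (Fin d))
      (show 0 < 1 / (4 * t) by positivity)
    rw [finrank_euclideanSpace_fin, show Real.pi / (1 / (4 * t)) = 4 * Real.pi * t by
      field_simp] at h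
    rw [← h]
    congr! 3 with x
    ring
  simp only [heatKernel]
  rw [integral_const_mul, h_gauss, ← Real.rpow_add (by positivity)]
  simp [neg_div]

theorem norm_sub_sq_div_add_norm_sq_div {V : Type*} [NormedAddCommGroup V] [InnerProductSpace ℝ V]
    (hs : 0 < s) (ht : 0 < t) (x y : V) :
    ‖x - y‖ ^ 2 / t + ‖y‖ ^ 2 / s =
      ‖x‖ ^ 2 / (s + t) + ‖y - (s / (s + t)) • x‖ ^ 2 / (s * t / (s + t)) := by
  rw [norm_sub_sq_real, norm_sub_sq_real, inner_smul_right, norm_smul, mul_pow, Real.norm_eq_abs,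
    sq_abs, real_inner_comm]
  field_simp
  ring

theorem heatKernel_sub_mul_heatKernel (hs : 0 < s) (ht : 0 < t)
    (x y : EuclideanSpace ℝ (Fin d)) :
    heatKernel d t (x - y) * heatKernel d s y =
      heatKernel d (s + t) x * heatKernel d (s * t / (s + t)) (y - (s / (s + t)) • x) := by
  have h_const : (4 * Real.pi * t) ^ (-(d : ℝ) / 2) * (4 * Real.pi * s) ^ (-(d : ℝ) / 2) =
      (4 * Real.pi * (s + t)) ^ (-(d : ℝ) / 2) *
        (4 * Real.pi * (s * t / (s + t))) ^ (-(d : ℝ) / 2) := by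
    rw [← Real.mul_rpow (by positivity) (by positivity),
      ← Real.mul_rpow (by positivity) (by positivity)]
    congr 1
    field_simp
  have h_exp : -‖x - y‖ ^ 2 / (4 * t) + -‖y‖ ^ 2 / (4 * s) = -‖x‖ ^ 2 / (4 * (s + t)) +
      -‖y - (s / (s + t)) • x‖ ^ 2 / (4 * (s * t / (s + t))) := by
    have h := norm_sub_sq_div_add_norm_sq_div hs ht x y
    simp only [neg_div, mul_comm (4 : ℝ), ← div_div] at h ⊢
    linarith
  simp only [heatKernel]
  rw [mul_mul_mul_comm, h_const, ← Real.exp_add, h_exp, Real.exp_add, mul_mul_mul_comm]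

end HeatKernel

section HeatSolution

variable {d : ℕ} {s t : ℝ}

theorem heatSol_eq_integral_heatKernel (u₀ : EuclideanSpace ℝ (Fin d) → ℝ)
    (x : EuclideanSpace ℝ (Fin d)) :
    heatSol d u₀ t x = ∫ y, heatKernel d t (x - y) * u₀ y := by
  simp only [heatSol, heatKernel, mul_assoc, integral_const_mul]

theorem heatSol_const_mul (c : ℝ) (u₀ : EuclideanSpace ℝ (Fin d) → ℝ)
    (x : EuclideanSpace ℝ (Fin d)) :
    heatSol d (fun y => c * u₀ y) t x = c * heatSol d u₀ t x := by
  simp only [heatSol_eq_integral_heatKernel, mul_left_comm _ c, integral_const_mul]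

theorem heatSol_comp_sub_right (u₀ : EuclideanSpace ℝ (Fin d) → ℝ)
    (z x : EuclideanSpace ℝ (Fin d)) :
    heatSol d (fun y => u₀ (y - z)) t x = heatSol d u₀ t (x - z) := by
  simp only [heatSol_eq_integral_heatKernel]
  rw [← integral_sub_right_eq_self (fun y => heatKernel d t (x - z - y) * u₀ y) z]
  simp only [sub_sub_sub_cancel_right]

theorem heatSol_heatKernel (hs : 0 < s) (ht : 0 < t) (x : EuclideanSpace ℝ (Fin d)) :
    heatSol d (heatKernel d s) t x = heatKernel d (s + t) x := by
  simp only [heatSol_eq_integral_heatKernel, heatKernel_sub_mul_heatKernel hs ht]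
  rw [integral_const_mul, integral_sub_right_eq_self (heatKernel d (s * t / (s + t))),
    integral_heatKernel (by positivity), mul_one]

-- By the semigroup law at the origin, `∫ K_t² = (K_t * K_t)(0) = K_{2t}(0)`.
theorem integral_heatKernel_sq (ht : 0 < t) :
    ∫ x, heatKernel d t x ^ 2 = (8 * Real.pi * t) ^ (-(d : ℝ) / 2) := by
  have h := heatSol_heatKernel (d := d) ht ht 0
  simp only [heatSol_eq_integral_heatKernel, zero_sub, heatKernel_neg, ← sq] at h
  rw [h, heatKernel_zero_right]
  congr 1
  ring

end HeatSolution

section UnitGaussian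

/-- The Gaussian proportional to the heat kernel at time `t > 0` whose `L²(ℝ^d)` norm is `1`. -/
def unitGaussian (d : ℕ) (t : ℝ) (x : EuclideanSpace ℝ (Fin d)) : ℝ :=
  (8 * Real.pi * t) ^ ((d : ℝ) / 4) * heatKernel d t x

variable {d : ℕ} {s t : ℝ}

theorem continuous_unitGaussian : Continuous (unitGaussian d t) :=
  continuous_const.mul continuous_heatKernel

theorem tendsto_unitGaussian_cocompact (ht : 0 < t) :
    Tendsto (unitGaussian d t) (cocompact _) (𝓝 0) := by
  unfold unitGaussian
  simpa using (tendsto_heatKernel_cocompact ht).const_mul ((8 * Real.pi * t) ^ ((d : ℝ) / 4))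

theorem integral_unitGaussian_sq (ht : 0 < t) : ∫ x, unitGaussian d t x ^ 2 = 1 := by
  simp only [unitGaussian, mul_pow]
  rw [integral_const_mul, integral_heatKernel_sq ht, ← Real.rpow_mul_natCast (by positivity),
    ← Real.rpow_add (by positivity),
    show (d : ℝ) / 4 * (2 : ℕ) + -(d : ℝ) / 2 = 0 by push_cast; ring, Real.rpow_zero]

theorem memLp_unitGaussian (ht : 0 < t) : MemLp (unitGaussian d t) 2 volume := by
  rw [memLp_two_iff_integrable_sq continuous_unitGaussian.aestronglyMeasurable]
  exact .of_integral_ne_zero (by simp [integral_unitGaussian_sq ht])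

theorem eLpNorm_unitGaussian (ht : 0 < t) : eLpNorm (unitGaussian d t) 2 volume = 1 := by
  rw [(memLp_unitGaussian ht).eLpNorm_eq_integral_rpow_norm two_ne_zero ofNat_ne_top]
  simp [integral_unitGaussian_sq ht]

theorem heatSol_unitGaussian (hs : 0 < s) (ht : 0 < t) :
    heatSol d (unitGaussian d s) t =
      (s / (s + t)) ^ ((d : ℝ) / 4) • unitGaussian d (s + t) := by
  ext x
  have h_scale : 8 * Real.pi * s = s / (s + t) * (8 * Real.pi * (s + t)) := by field_simp
  calc heatSol d (unitGaussian d s) t x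
      = (8 * Real.pi * s) ^ ((d : ℝ) / 4) * heatKernel d (s + t) x := by
        rw [← heatSol_heatKernel hs ht, ← heatSol_const_mul]; rfl
    _ = _ := by
        rw [h_scale, Real.mul_rpow (by positivity) (by positivity), mul_assoc]; rfl

theorem eLpNorm_heatSol_unitGaussian (hs : 0 < s) (ht : 0 < t) :
    eLpNorm (heatSol d (unitGaussian d s) t) 2 volume =
      ENNReal.ofReal ((s / (s + t)) ^ ((d : ℝ) / 4)) := by
  rw [heatSol_unitGaussian hs ht, eLpNorm_const_smul, eLpNorm_unitGaussian (by positivity),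
    mul_one, Real.enorm_of_nonneg (by positivity)]

theorem tendsto_div_add_const_atTop (c : ℝ) :
    Tendsto (fun x : ℝ => x / (x + c)) atTop (𝓝 1) := by
  have h_inv : Tendsto (fun x : ℝ => (x + c)⁻¹) atTop (𝓝 0) :=
    (tendsto_atTop_add_const_right atTop c tendsto_id).inv_tendsto_atTop
  have h_one_sub : Tendsto (fun x : ℝ => 1 - c * (x + c)⁻¹) atTop (𝓝 1) := by
    simpa using (h_inv.const_mul c).const_sub 1
  refine h_one_sub.congr' ?_
  filter_upwards [eventually_gt_atTop (-c)] with x hx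
  have : x + c ≠ 0 := by linarith
  field_simp
  ring

theorem tendsto_eLpNorm_heatSol_unitGaussian (ht : 0 < t) :
    Tendsto (fun s => eLpNorm (heatSol d (unitGaussian d s) t) 2 volume) atTop (𝓝 1) := by
  have h_norm := ENNReal.tendsto_ofReal
    ((tendsto_div_add_const_atTop t).rpow_const (p := (d : ℝ) / 4) (.inl one_ne_zero))
  simp only [Real.one_rpow, ENNReal.ofReal_one] at h_norm
  refine h_norm.congr' ?_
  filter_upwards [eventually_gt_atTop 0] with s hs
  exact (eLpNorm_heatSol_unitGaussian hs ht).symm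

end UnitGaussian

section Sampling

theorem abs_fN_le_one (d : ℕ) (N : ℝ) (n : Fin d → ℤ) (x : EuclideanSpace ℝ (Fin d)) :
    |fN d N n x| ≤ 1 := by
  rw [fN, Finset.abs_prod]
  exact Finset.prod_le_one (fun _ _ => abs_nonneg _) fun _ _ => Real.abs_sinc_le_one _

theorem ofReal_half_mul_rpow_lt_one {T r : ℝ} (hT : 0 ≤ T) (hr : r ≤ 0) :
    ENNReal.ofReal (1 / 2 * (T + 1) ^ r) < 1 := by
  rw [ENNReal.ofReal_lt_one]
  linarith [Real.rpow_le_one_of_one_le_of_nonpos (le_add_of_nonneg_left hT) hr]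

theorem statement13_general {d : ℕ} (hd : 0 < d) {T : ℝ} (hT : 0 < T) {ι : Type*} (s : Finset ι)
    (q : ι → EuclideanSpace ℝ (Fin d)) {g : ι → EuclideanSpace ℝ (Fin d) → ℝ} {M : ι → ℝ}
    (hg : ∀ i ∈ s, ∀ x, |g i x| ≤ M i) {a : ℝ≥0∞} (ha : a < 1) :
    ∃ u₀ : EuclideanSpace ℝ (Fin d) → ℝ, MemLp u₀ 2 volume ∧ l2norm d u₀ = 1 ∧
      a < eLpNorm (fun x => heatSol d u₀ T x - ∑ i ∈ s, heatSol d u₀ T (q i) * g i x)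
        2 volume := by
  have : Nonempty (Fin d) := Fin.pos_iff_nonempty.mp hd
  have : NoncompactSpace (EuclideanSpace ℝ (Fin d)) := NormedSpace.noncompactSpace ℝ _
  obtain ⟨σ, haσ, hσ⟩ := (((tendsto_eLpNorm_heatSol_unitGaussian (d := d) hT).eventually_const_lt
    ha).and (eventually_gt_atTop 0)).exists
  have h_cont : Continuous (heatSol d (unitGaussian d σ) T) := by
    rw [heatSol_unitGaussian hσ hT]
    exact continuous_unitGaussian.const_smul _
  have h_vanish : Tendsto (heatSol d (unitGaussian d σ) T) (cocompact _) (𝓝 0) := by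
    rw [heatSol_unitGaussian hσ hT, ← smul_zero ((σ / (σ + T)) ^ ((d : ℝ) / 4))]
    exact (tendsto_unitGaussian_cocompact (by positivity)).const_smul _
  obtain ⟨z, hz⟩ := exists_translate_lt_eLpNorm_sub_sum h_cont.aestronglyMeasurable h_vanish s q
    hg haσ
  refine ⟨fun y => unitGaussian d σ (y - z),
    (memLp_unitGaussian hσ).comp_measurePreserving (measurePreserving_sub_right volume z), ?_, ?_⟩
  · rw [l2norm, eLpNorm_comp_sub_right, eLpNorm_unitGaussian hσ, ENNReal.toReal_one]
  · simpa only [heatSol_comp_sub_right] using hz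

end Sampling

/-- The asymptotic observability identity fails with finitely many lattice points:
for every `T > 0`, `N > 0` and `m > 0` (where `s` is the finite set of `n ∈ ℤ^d` with
`|n| ≤ m`), there is `u₀ ∈ L²(ℝ^d)` with `‖u₀‖ ≤ 1` such that
`‖u(T,·) - Σ_{|n| ≤ m} u(T,n/N) f_{N,n}‖ ≥ (1/2)(T+1)^{-d/4}`. -/
theorem statement13 (d : ℕ) (hd : 0 < d) (T N m : ℝ) (hT : 0 < T) (hN : 0 < N) (hm : 0 < m)
    (s : Finset (Fin d → ℤ))
    (hs : ∀ n : Fin d → ℤ, n ∈ s ↔ Real.sqrt (∑ j, ((n j : ℝ)) ^ 2) ≤ m) :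
    ∃ u₀ : EuclideanSpace ℝ (Fin d) → ℝ, MemLp u₀ 2 volume ∧ l2norm d u₀ ≤ 1 ∧
      ENNReal.ofReal ((1 / 2) * (T + 1) ^ (-(d : ℝ) / 4)) ≤
        eLpNorm (fun x => heatSol d u₀ T x -
          ∑ n ∈ s, heatSol d u₀ T (latticePt d N n) * fN d N n x) 2 volume := by
  have h_exponent : -(d : ℝ) / 4 ≤ 0 := by linarith [Nat.cast_nonneg (α := ℝ) d]
  obtain ⟨u₀, hu₀, h_unit, h_far⟩ := statement13_general hd hT s (latticePt d N)
    (fun n _ => abs_fN_le_one d N n) (ofReal_half_mul_rpow_lt_one hT.le h_exponent)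
  exact ⟨u₀, hu₀, h_unit.le, h_far.le⟩
end
end
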